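/- Let G be a finite simple graph. Then reg I(G) ≤ co-chord(G) + 1, where co-chord(G) is the least number of co-chordal subgraphs of G whose union is G. -/

import Mathlib

/-!
The proof bounds the regularity by induction on the number of vertices.

If an ideal has the form `I = J + x L`, where `J ⊆ L` and the variable `x` is a nonzerodivisor
modulo `J`, the exact sequence `0 → J(-1) → J ⊕ L(-1) → I → 0` gives
`reg I ≤ max (reg J) (reg L + 1)` (`idealReg_add`). For a vertex `x` in a vertex set `W`, the ideal
`I(G[W]) + (U)` has this form with `J = I(G[W \ x]) + (U)` and
`L = I(G[W \ N[x]]) + (U ∪ N(x))` (`idealReg_step`). Suppose that the edges of `G[W]` are covered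
by co-chordal subgraphs `G_1, …, G_r`. By Dirac's theorem (`exists_simplicial`), some `x ∈ W` is
simplicial in the complement of `G_1` restricted to `W`. The vertices of `W` outside `N[x]` are then
pairwise nonadjacent in `G_1`, so `G_2, …, G_r` already cover `G[W \ N[x]]`, and induction gives
`reg J ≤ r + 1` and `reg L ≤ r`, hence the bound `r + 1` (`idealReg_of_cover`). The base case, an
ideal generated by variables, is a further instance of `idealReg_add`.

Regularity bounds are handled through the inductive predicate `RegLE` (generators in degrees `≤ r`
whose syzygies satisfy the bound `r + 1`). It is stable under extensions (`RegLE.middle`, the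
horseshoe lemma) and under suitable cokernels (`RegLE.third`). This needs neither minimal
resolutions nor `Tor`. A bound of this kind unfolds to a graded free resolution
(`IdealReg.exists_gradedFreeRes`).
-/

open MvPolynomial

/-- The edge ideal `I(G)` of a finite simple graph `G` on vertex set `{x_1, ..., x_n}`:
the ideal of `S = K[x_1, ..., x_n]` generated by the monomials `x_i * x_j` for the
edges `{x_i, x_j}` of `G`. -/
noncomputable def edgeIdeal (K : Type) [Field K] {n : ℕ} (G : SimpleGraph (Fin n)) :
    Ideal (MvPolynomial (Fin n) K) :=
  Ideal.span { m | ∃ i j, G.Adj i j ∧ m = X i * X j }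

/-- A finite graded free resolution of an ideal `I` of the polynomial ring
`S = K[x_1, ..., x_n]`.  The `i`-th free module is `F i = ⨁_a S(-shift i a)`,
realized as `Fin (rank i) → S`; the differentials and the augmentation `F 0 → I ⊆ S`
are degree-preserving (each matrix entry is homogeneous of the appropriate degree),
and the complex `0 → F len → ⋯ → F 1 → F 0 → I → 0` is exact. -/
structure GradedFreeRes {n : ℕ} (K : Type) [Field K]
    (I : Ideal (MvPolynomial (Fin n) K)) where
  len : ℕ
  rank : ℕ → ℕ
  rank_zero : ∀ i, len < i → rank i = 0
  shift : (i : ℕ) → Fin (rank i) → ℕ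
  d : (i : ℕ) →
    ((Fin (rank (i + 1)) → MvPolynomial (Fin n) K) →ₗ[MvPolynomial (Fin n) K]
      (Fin (rank i) → MvPolynomial (Fin n) K))
  aug : (Fin (rank 0) → MvPolynomial (Fin n) K) →ₗ[MvPolynomial (Fin n) K]
      MvPolynomial (Fin n) K
  aug_range : LinearMap.range aug = I
  exact_zero : LinearMap.ker aug = LinearMap.range (d 0)
  exact_succ : ∀ i, LinearMap.ker (d i) = LinearMap.range (d (i + 1))
  homog_aug : ∀ a, (aug (Pi.single a 1)).IsHomogeneous (shift 0 a)
  homog_d : ∀ i (b : Fin (rank (i + 1))) (a : Fin (rank i)),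
    d i (Pi.single b 1) a = 0 ∨
      ∃ e, shift (i + 1) b = shift i a + e ∧ (d i (Pi.single b 1) a).IsHomogeneous e

/-- The Castelnuovo–Mumford regularity of an ideal `I ⊆ K[x_1, ..., x_n]`:
the least integer `r` such that `I` admits a (finite) graded free resolution whose
`i`-th free module is generated in degrees `≤ r + i`.  The minimum is attained by the
minimal graded free resolution, so this agrees with the usual definition
`reg I = max { j - i : β_{i,j}(I) ≠ 0 }`. -/
noncomputable def reg {n : ℕ} (K : Type) [Field K]
    (I : Ideal (MvPolynomial (Fin n) K)) : ℤ :=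
  sInf { r : ℤ | ∃ F : GradedFreeRes K I,
    ∀ i, ∀ a : Fin (F.rank i), (F.shift i a : ℤ) - (i : ℤ) ≤ r }

/-- A graph is chordal if every cycle of length at least 4 has a chord, i.e. an edge
of the graph joining two vertices of the cycle which is not an edge of the cycle. -/
def Chordal {V : Type} (G : SimpleGraph V) : Prop :=
  ∀ (v : V) (w : G.Walk v v), w.IsCycle → 4 ≤ w.length →
    ∃ a b, a ∈ w.support ∧ b ∈ w.support ∧ G.Adj a b ∧ s(a, b) ∉ w.edges

/-- The co-chordal number `co-chord(G)`: the least number `r` of co-chordal subgraphs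
`G_1, ..., G_r` of `G` (subgraphs whose complement is chordal) whose union is `G`,
i.e. `E(G) = E(G_1) ∪ ⋯ ∪ E(G_r)`. -/
noncomputable def cochordNum {n : ℕ} (G : SimpleGraph (Fin n)) : ℕ :=
  sInf { r | ∃ f : Fin r → SimpleGraph (Fin n),
    (∀ i, f i ≤ G ∧ Chordal (f i)ᶜ) ∧ (⨆ i, f i) = G }

namespace CoChord

/-! ### Regularity of graded modules -/

section Algebra
variable {K : Type} [Field K] {n : ℕ}

/-- The degree-`d` piece of the graded free module `⨁ₐ S(-s a)`, realized as `Fin m → S`.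
A coordinate of degree `d - s a` is described by `d = s a + e`, so when `d < s a` it must vanish. -/
noncomputable def freeDeg (K : Type) [Field K] (n : ℕ) {m : ℕ} (s : Fin m → ℕ) (d : ℕ) :
    AddSubgroup (Fin m → MvPolynomial (Fin n) K) where
  carrier := {v | ∀ a, v a = 0 ∨ ∃ e, d = s a + e ∧ (v a).IsHomogeneous e}
  zero_mem' := fun _ => Or.inl rfl
  add_mem' := by
    intro v w hv hw a
    rcases hv a with h | ⟨e, he, h⟩
    · simpa [h] using hw a
    · rcases hw a with h' | ⟨e', he', h'⟩
      · exact Or.inr ⟨e, he, by simpa [h'] using h⟩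
      · obtain rfl : e = e' := by omega
        exact Or.inr ⟨e, he, h.add h'⟩
  neg_mem' := by
    intro v hv a
    rcases hv a with h | ⟨e, he, h⟩
    · exact Or.inl (by simp [h])
    · exact Or.inr ⟨e, he, h.neg⟩

lemma mem_freeDeg {m : ℕ} {s : Fin m → ℕ} {d : ℕ} {v : Fin m → MvPolynomial (Fin n) K} :
    v ∈ freeDeg K n s d ↔ ∀ a, v a = 0 ∨ ∃ e, d = s a + e ∧ (v a).IsHomogeneous e := Iff.rfl

variable {M MA MB MC : Type}
  [AddCommGroup M] [Module (MvPolynomial (Fin n) K) M]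
  [AddCommGroup MA] [Module (MvPolynomial (Fin n) K) MA]
  [AddCommGroup MB] [Module (MvPolynomial (Fin n) K) MB]
  [AddCommGroup MC] [Module (MvPolynomial (Fin n) K) MC]

/-- The degree-`d` syzygies of the generators `g`, where `g a` has degree `s a`. -/
noncomputable def syz {m : ℕ} (s : Fin m → ℕ) (g : Fin m → M) (d : ℕ) :
    AddSubgroup (Fin m → MvPolynomial (Fin n) K) :=
  freeDeg K n s d ⊓ (Fintype.linearCombination (MvPolynomial (Fin n) K) g).toAddMonoidHom.ker

lemma mem_syz {m : ℕ} {s : Fin m → ℕ} {g : Fin m → M} {d : ℕ}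
    {v : Fin m → MvPolynomial (Fin n) K} :
    v ∈ syz s g d ↔ v ∈ freeDeg K n s d ∧ ∑ a, v a • g a = 0 := by
  simp [syz, AddMonoidHom.mem_ker, Fintype.linearCombination_apply]

variable (K n) in
/-- The family `gr` of subgroups is stable under multiplication by forms: `S_e • gr d ⊆ gr (d + e)`.
The subgroups need not span `M`; the graded module meant is the sum of the `gr d`, so that
submodules of `M` are handled by changing `gr` only. -/
def IsGraded (gr : ℕ → AddSubgroup M) : Prop :=
  ∀ (e d : ℕ) (p : MvPolynomial (Fin n) K) (y : M),
    p.IsHomogeneous e → y ∈ gr d → p • y ∈ gr (d + e)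

variable (K n) in
/-- The graded module with pieces `gr d ⊆ M` has a graded free resolution with at most `l` terms
whose `i`-th term is generated in degrees `≤ r + i`: inductively, there are finitely many generators
of degrees `≤ r` whose module of syzygies has such a resolution with `l - 1` terms and bound `r + 1`. -/
def RegLE : ℕ → ∀ (M : Type) [AddCommGroup M] [Module (MvPolynomial (Fin n) K) M],
    (ℕ → AddSubgroup M) → ℕ → Prop
  | 0, _, _, _, gr, _ => ∀ d, gr d = ⊥
  | l + 1, M, _, _, gr, r => ∃ (m : ℕ) (s : Fin m → ℕ) (g : Fin m → M),
      (∀ a, s a ≤ r) ∧ (∀ a, g a ∈ gr (s a)) ∧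
      (∀ d, ∀ y ∈ gr d, ∃ v ∈ freeDeg K n s d, ∑ a, v a • g a = y) ∧
      RegLE l (Fin m → MvPolynomial (Fin n) K) (syz s g) (r + 1)

lemma isGraded_freeDeg {m : ℕ} (s : Fin m → ℕ) : IsGraded K n (freeDeg K n s) := by
  intro e d p y hp hy a
  rcases hy a with h | ⟨f, rfl, h⟩
  · exact Or.inl (by simp [h])
  · exact Or.inr ⟨e + f, by omega, hp.mul h⟩

lemma isGraded_syz {m : ℕ} (s : Fin m → ℕ) (g : Fin m → M) : IsGraded K n (syz (K := K) (n := n) s g) := by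
  intro e d p y hp hy
  rw [mem_syz] at hy ⊢
  refine ⟨isGraded_freeDeg s e d p y hp hy.1, ?_⟩
  simp only [Pi.smul_apply, smul_assoc, ← Finset.smul_sum, hy.2, smul_zero]

lemma IsGraded.sum_mem {gr : ℕ → AddSubgroup M} (h : IsGraded K n gr) {m : ℕ} {s : Fin m → ℕ}
    {g : Fin m → M} (hg : ∀ a, g a ∈ gr (s a)) {d : ℕ} {v : Fin m → MvPolynomial (Fin n) K}
    (hv : v ∈ freeDeg K n s d) : ∑ a, v a • g a ∈ gr d := by
  refine _root_.sum_mem fun a _ => ?_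
  rcases hv a with h0 | ⟨e, rfl, he⟩
  · simp [h0]
  · exact h _ _ _ _ he (hg a)

lemma regLE_of_bot (l : ℕ) : ∀ {M : Type} [AddCommGroup M] [Module (MvPolynomial (Fin n) K) M]
    {gr : ℕ → AddSubgroup M} (r : ℕ), (∀ d, gr d = ⊥) → RegLE K n l M gr r := by
  induction l with
  | zero => intro M _ _ gr r h; exact h
  | succ l ih =>
    intro M _ _ gr r h
    refine ⟨0, Fin.elim0, Fin.elim0, fun a => a.elim0, fun a => a.elim0, ?_, ih _ ?_⟩
    · intro d y hy
      rw [h, AddSubgroup.mem_bot] at hy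
      exact ⟨0, zero_mem _, by simp [hy]⟩
    · intro d
      exact Subsingleton.elim _ _

lemma RegLE.mono {l : ℕ} : ∀ {l' : ℕ} {M : Type} [AddCommGroup M]
    [Module (MvPolynomial (Fin n) K) M] {gr : ℕ → AddSubgroup M} {r r' : ℕ},
    RegLE K n l M gr r → l ≤ l' → r ≤ r' → RegLE K n l' M gr r' := by
  induction l with
  | zero => intro l' M _ _ gr r r' h _ _; exact regLE_of_bot _ _ h
  | succ l ih =>
    intro l' M _ _ gr r r' h hl hr
    obtain ⟨l', rfl⟩ : ∃ k, l' = k + 1 := ⟨l' - 1, by omega⟩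
    obtain ⟨m, s, g, hs, hg, hsur, ht⟩ := h
    exact ⟨m, s, g, fun a => (hs a).trans hr, hg, hsur, ih ht (by omega) (by omega)⟩

lemma append_mem_freeDeg {m m' : ℕ} {s : Fin m → ℕ} {s' : Fin m' → ℕ} {d : ℕ}
    {u : Fin m → MvPolynomial (Fin n) K} {v : Fin m' → MvPolynomial (Fin n) K}
    (hu : u ∈ freeDeg K n s d) (hv : v ∈ freeDeg K n s' d) :
    Fin.append u v ∈ freeDeg K n (Fin.append s s') d := by
  intro a
  refine Fin.addCases (fun i => ?_) (fun i => ?_) a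
  · simpa using hu i
  · simpa using hv i

lemma left_mem_freeDeg {m m' : ℕ} {s : Fin m → ℕ} {s' : Fin m' → ℕ} {d : ℕ}
    {w : Fin (m + m') → MvPolynomial (Fin n) K}
    (hw : w ∈ freeDeg K n (Fin.append s s') d) :
    (fun i => w (Fin.castAdd m' i)) ∈ freeDeg K n s d := by
  intro a
  simpa using hw (Fin.castAdd m' a)

lemma right_mem_freeDeg {m m' : ℕ} {s : Fin m → ℕ} {s' : Fin m' → ℕ} {d : ℕ}
    {w : Fin (m + m') → MvPolynomial (Fin n) K}
    (hw : w ∈ freeDeg K n (Fin.append s s') d) :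
    (fun i => w (Fin.natAdd m i)) ∈ freeDeg K n s' d := by
  intro a
  simpa using hw (Fin.natAdd m a)

/-- Horseshoe lemma: for a graded exact sequence `0 → A → B → C → 0`, a bound for `A` and `C` is
one for `B`. The generators of `B` are those of `A` with lifts of those of `C`, and the syzygies
again form a short exact sequence. -/
lemma RegLE.middle {l : ℕ} : ∀ {MA MB MC : Type}
    [AddCommGroup MA] [Module (MvPolynomial (Fin n) K) MA]
    [AddCommGroup MB] [Module (MvPolynomial (Fin n) K) MB]
    [AddCommGroup MC] [Module (MvPolynomial (Fin n) K) MC]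
    {A : ℕ → AddSubgroup MA} {B : ℕ → AddSubgroup MB} {C : ℕ → AddSubgroup MC} {r : ℕ}
    (ι : MA →ₗ[MvPolynomial (Fin n) K] MB) (π : MB →ₗ[MvPolynomial (Fin n) K] MC),
    IsGraded K n A → IsGraded K n B →
    (∀ d, ∀ a ∈ A d, ι a ∈ B d) →
    (∀ d, ∀ a ∈ A d, ι a = 0 → a = 0) →
    (∀ d, ∀ b ∈ B d, π b ∈ C d) →
    (∀ d, ∀ c ∈ C d, ∃ b ∈ B d, π b = c) →
    (∀ d, ∀ a ∈ A d, π (ι a) = 0) →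
    (∀ d, ∀ b ∈ B d, π b = 0 → ∃ a ∈ A d, ι a = b) →
    RegLE K n l MA A r → RegLE K n l MC C r → RegLE K n l MB B r := by
  induction l with
  | zero =>
    intro MA MB MC _ _ _ _ _ _ A B C r ι π gA gB hι hinj hπ hsur hcomp hex hA hC d
    rw [eq_bot_iff]
    intro b hb
    have h1 := hπ d b hb
    rw [hC d, AddSubgroup.mem_bot] at h1
    obtain ⟨a, ha, rfl⟩ := hex d b hb h1
    rw [hA d, AddSubgroup.mem_bot] at ha
    simp [ha]
  | succ l ih =>
    intro MA MB MC _ _ _ _ _ _ A B C r ι π gA gB hι hinj hπ hsur hcomp hex hA hC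
    obtain ⟨mA, sA, fA, hsA, hfA, hsurA, htA⟩ := hA
    obtain ⟨mC, sC, fC, hsC, hfC, hsurC, htC⟩ := hC
    choose b hb hbπ using fun k => hsur _ _ (hfC k)
    have hgB : ∀ a, Fin.append (fun i => ι (fA i)) b a ∈ B (Fin.append sA sC a) := by
      intro a
      refine Fin.addCases (fun i => ?_) (fun i => ?_) a
      · simpa using hι _ _ (hfA i)
      · simpa using hb i
    have hπsum : ∀ v : Fin mC → MvPolynomial (Fin n) K,
        π (∑ k, v k • b k) = ∑ k, v k • fC k := by
      intro v; simp [map_sum, hbπ]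
    have hιsum : ∀ v : Fin mA → MvPolynomial (Fin n) K,
        ∑ k, v k • ι (fA k) = ι (∑ k, v k • fA k) := by
      intro v; simp [map_sum]
    refine ⟨mA + mC, Fin.append sA sC, Fin.append (fun i => ι (fA i)) b, ?_, hgB, ?_, ?_⟩
    · intro a
      refine Fin.addCases (fun i => ?_) (fun i => ?_) a
      · simpa using hsA i
      · simpa using hsC i
    · intro d y hy
      obtain ⟨v, hv, hvy⟩ := hsurC d _ (hπ d y hy)
      obtain ⟨a, ha, hay⟩ := hex d (y - ∑ k, v k • b k)
        (sub_mem hy (gB.sum_mem hb hv)) (by rw [map_sub, hπsum, hvy, sub_self])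
      obtain ⟨u, hu, rfl⟩ := hsurA d a ha
      refine ⟨Fin.append u v, append_mem_freeDeg hu hv, ?_⟩
      simp only [Fin.sum_univ_add, Fin.append_left, Fin.append_right]
      rw [hιsum, hay]; abel
    · refine ih (A := syz sA fA) (C := syz sC fC)
        { toFun := fun u => Fin.append u 0
          map_add' := ?_
          map_smul' := ?_ }
        { toFun := fun w i => w (Fin.natAdd mA i)
          map_add' := fun _ _ => rfl
          map_smul' := fun _ _ => rfl }
        (isGraded_syz _ _) (isGraded_syz _ _) ?_ ?_ ?_ ?_ ?_ ?_ htA htC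
      · intro u v
        funext a
        refine Fin.addCases (fun i => ?_) (fun i => ?_) a <;> simp
      · intro c v
        funext a
        refine Fin.addCases (fun i => ?_) (fun i => ?_) a <;> simp
      · intro d u hu
        rw [mem_syz] at hu ⊢
        refine ⟨append_mem_freeDeg hu.1 (zero_mem _), ?_⟩
        simp [Fin.sum_univ_add, hιsum, hu.2]
      · intro d u _ h
        funext i
        have := congrFun h (Fin.castAdd mC i)
        simpa using this
      · intro d w hw
        rw [mem_syz] at hw ⊢
        refine ⟨right_mem_freeDeg hw.1, ?_⟩
        have h := congrArg π hw.2
        simp only [Fin.sum_univ_add, Fin.append_left, Fin.append_right, map_add, hιsum,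
          map_zero, hπsum] at h
        rwa [hcomp d _ (gA.sum_mem hfA (left_mem_freeDeg hw.1)), zero_add] at h
      · intro d v hv
        rw [mem_syz] at hv
        obtain ⟨a, ha, hab⟩ := hex d (∑ k, v k • b k) (gB.sum_mem hb hv.1)
          (by rw [hπsum, hv.2])
        obtain ⟨u, hu, rfl⟩ := hsurA d a ha
        refine ⟨Fin.append (-u) v, ?_, ?_⟩
        · rw [mem_syz]
          refine ⟨append_mem_freeDeg (neg_mem hu) hv.1, ?_⟩
          simp only [Fin.sum_univ_add, Fin.append_left, Fin.append_right]
          rw [hιsum, ← hab]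
          simp
        · funext i; simp
      · intro d u _
        funext i; simp
      · intro d w hw h0
        rw [mem_syz] at hw
        have h0' : ∀ i, w (Fin.natAdd mA i) = 0 := fun i => congrFun h0 i
        refine ⟨fun i => w (Fin.castAdd mC i), ?_, ?_⟩
        · rw [mem_syz]
          refine ⟨left_mem_freeDeg hw.1, ?_⟩
          refine hinj d _ (gA.sum_mem hfA (left_mem_freeDeg hw.1)) ?_
          have h := hw.2
          simp only [Fin.sum_univ_add, Fin.append_left, Fin.append_right, h0', zero_smul,
            Finset.sum_const_zero, add_zero, hιsum] at h
          exact h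
        · funext a
          refine Fin.addCases (fun i => ?_) (fun i => ?_) a
          · simp
          · simp [h0']

/-- For a graded exact sequence `0 → A → B → C → 0` with `reg A ≤ r + 1` and `reg B ≤ r` one has
`reg C ≤ r`. Generators of `B` generate `C`, and the new syzygy module is an extension
of `A` by the syzygies of `B`, to which `RegLE.middle` applies. -/
lemma RegLE.third {l r : ℕ} {A : ℕ → AddSubgroup MA} {B : ℕ → AddSubgroup MB}
    {C : ℕ → AddSubgroup MC}
    (ι : MA →ₗ[MvPolynomial (Fin n) K] MB) (π : MB →ₗ[MvPolynomial (Fin n) K] MC)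
    (gA : IsGraded K n A) (gB : IsGraded K n B)
    (hι : ∀ d, ∀ a ∈ A d, ι a ∈ B d)
    (hinj : ∀ d, ∀ a ∈ A d, ι a = 0 → a = 0)
    (hπ : ∀ d, ∀ b ∈ B d, π b ∈ C d)
    (hsur : ∀ d, ∀ c ∈ C d, ∃ b ∈ B d, π b = c)
    (hcomp : ∀ d, ∀ a ∈ A d, π (ι a) = 0)
    (hex : ∀ d, ∀ b ∈ B d, π b = 0 → ∃ a ∈ A d, ι a = b)
    (hA : RegLE K n l MA A (r + 1)) (hB : RegLE K n (l + 1) MB B r) :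
    RegLE K n (l + 1) MC C r := by
  obtain ⟨m, s, g, hs, hg, hsurB, ht⟩ := hB
  have hπsum : ∀ v : Fin m → MvPolynomial (Fin n) K,
      ∑ k, v k • π (g k) = π (∑ k, v k • g k) := by
    intro v; simp [map_sum]
  -- the image of `A` in `MB` has the same resolution as `A`
  have gA' : IsGraded K n fun d => (A d).map ι.toAddMonoidHom := by
    rintro e d p _ hp ⟨a, ha, rfl⟩
    exact ⟨p • a, gA e d p a hp ha, by simp⟩
  have hA' : RegLE K n l MB (fun d => (A d).map ι.toAddMonoidHom) (r + 1) := by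
    -- `RegLE.middle` with zero cokernel transports the bound along the isomorphism `A ≅ ι A`
    refine RegLE.middle (C := fun _ => (⊥ : AddSubgroup MB)) ι 0 gA gA' ?_ hinj ?_ ?_ ?_ ?_ hA
      (regLE_of_bot _ _ fun _ => rfl)
    · intro d a ha; exact ⟨a, ha, rfl⟩
    · intro d b _; simp
    · intro d c hc; exact ⟨0, zero_mem _, by simpa using hc.symm⟩
    · intro d a _; rfl
    · rintro d _ ⟨a, ha, rfl⟩ _; exact ⟨a, ha, rfl⟩
  refine ⟨m, s, fun k => π (g k), hs, fun a => hπ _ _ (hg a), ?_, ?_⟩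
  · intro d c hc
    obtain ⟨b, hb, rfl⟩ := hsur d c hc
    obtain ⟨v, hv, rfl⟩ := hsurB d b hb
    exact ⟨v, hv, hπsum v⟩
  · refine RegLE.middle LinearMap.id (Fintype.linearCombination (MvPolynomial (Fin n) K) g)
      (isGraded_syz s g) (isGraded_syz _ _) ?_ ?_ ?_ ?_ ?_ ?_ ht hA'
    · intro d v hv
      rw [mem_syz] at hv
      rw [LinearMap.id_apply, mem_syz, hπsum, hv.2, map_zero]
      exact ⟨hv.1, rfl⟩
    · intro d v _ h; exact h
    · intro d v hv
      rw [mem_syz, hπsum] at hv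
      obtain ⟨a, ha, hav⟩ := hex d _ (gB.sum_mem hg hv.1) hv.2
      exact ⟨a, ha, hav⟩
    · rintro d _ ⟨a, ha, rfl⟩
      obtain ⟨v, hv, hva⟩ := hsurB d _ (hι d a ha)
      refine ⟨v, ?_, hva⟩
      rw [mem_syz, hπsum, hva]
      exact ⟨hv, hcomp d a ha⟩
    · intro d v hv
      exact (mem_syz.1 hv).2
    · intro d v hv h
      exact ⟨v, mem_syz.2 ⟨(mem_syz.1 hv).1, h⟩, rfl⟩

/-- The grading of the shifted module `M(-1)`. -/
def shiftGr (gr : ℕ → AddSubgroup M) : ℕ → AddSubgroup M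
  | 0 => ⊥
  | d + 1 => gr d

lemma isGraded_shiftGr {gr : ℕ → AddSubgroup M} (h : IsGraded K n gr) :
    IsGraded K n (shiftGr gr) := by
  intro e d p y hp hy
  cases d with
  | zero =>
    have : y = 0 := hy
    simp [this]
  | succ d =>
    rw [Nat.add_right_comm]
    exact h e d p y hp hy

lemma mem_freeDeg_succ {m : ℕ} {s : Fin m → ℕ} {d : ℕ} {v : Fin m → MvPolynomial (Fin n) K} :
    v ∈ freeDeg K n (fun a => s a + 1) (d + 1) ↔ v ∈ freeDeg K n s d := by
  simp only [mem_freeDeg, Nat.add_right_comm, Nat.add_right_cancel_iff]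

lemma mem_freeDeg_zero {m : ℕ} {s : Fin m → ℕ} {v : Fin m → MvPolynomial (Fin n) K} :
    v ∈ freeDeg K n (fun a => s a + 1) 0 ↔ v = 0 := by
  refine ⟨fun h => funext fun a => ?_, fun h => h ▸ zero_mem _⟩
  rcases h a with h | ⟨e, he, _⟩
  · exact h
  · simp only at he; omega

lemma RegLE.shift {l : ℕ} : ∀ {M : Type} [AddCommGroup M]
    [Module (MvPolynomial (Fin n) K) M] {gr : ℕ → AddSubgroup M} {r : ℕ},
    RegLE K n l M gr r → RegLE K n l M (shiftGr gr) (r + 1) := by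
  induction l with
  | zero =>
    intro M _ _ gr r h d
    cases d with
    | zero => rfl
    | succ d => exact h d
  | succ l ih =>
    intro M _ _ gr r h
    obtain ⟨m, s, g, hs, hg, hsur, ht⟩ := h
    refine ⟨m, fun a => s a + 1, g, fun a => Nat.succ_le_succ (hs a), hg, ?_, ?_⟩
    · intro d y hy
      cases d with
      | zero =>
        have : y = 0 := hy
        exact ⟨0, zero_mem _, by simp [this]⟩
      | succ d =>
        obtain ⟨v, hv, hvy⟩ := hsur d y hy
        exact ⟨v, mem_freeDeg_succ.2 hv, hvy⟩
    · have : syz (K := K) (n := n) (fun a => s a + 1) g = shiftGr (syz s g) := by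
        funext d
        ext v
        cases d with
        | zero =>
          rw [mem_syz, mem_freeDeg_zero]
          exact ⟨fun h => h.1, fun h => by have : v = 0 := h; simp [this]⟩
        | succ d =>
          rw [mem_syz, mem_freeDeg_succ]
          exact mem_syz.symm
      rw [this]
      exact ih ht

lemma RegLE.prod {l r : ℕ} {A : ℕ → AddSubgroup MA} {B : ℕ → AddSubgroup MB}
    (gA : IsGraded K n A) (gB : IsGraded K n B)
    (hA : RegLE K n l MA A r) (hB : RegLE K n l MB B r) :
    RegLE K n l (MA × MB) (fun d => (A d).prod (B d)) r := by
  refine RegLE.middle (LinearMap.inl _ MA MB) (LinearMap.snd _ MA MB) gA ?_ ?_ ?_ ?_ ?_ ?_ ?_ hA hB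
  · intro e d p y hp hy
    exact ⟨gA e d p _ hp hy.1, gB e d p _ hp hy.2⟩
  · intro d a ha
    exact ⟨ha, zero_mem _⟩
  · intro d a _ h
    exact congrArg Prod.fst h
  · intro d b hb; exact hb.2
  · intro d c hc; exact ⟨(0, c), ⟨zero_mem _, hc⟩, rfl⟩
  · intro d a _; rfl
  · rintro d ⟨b, c⟩ hb hc
    have : c = 0 := hc
    exact ⟨b, hb.1, by simp [this]⟩

/-! ### Regularity of homogeneous ideals -/

/-- The degree-`d` forms of the ideal `I`. -/
noncomputable def idealDeg (I : Ideal (MvPolynomial (Fin n) K)) (d : ℕ) :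
    AddSubgroup (MvPolynomial (Fin n) K) :=
  I.toAddSubgroup ⊓ (homogeneousSubmodule (Fin n) K d).toAddSubgroup

lemma mem_idealDeg {I : Ideal (MvPolynomial (Fin n) K)} {d : ℕ} {p : MvPolynomial (Fin n) K} :
    p ∈ idealDeg I d ↔ p ∈ I ∧ p.IsHomogeneous d := Iff.rfl

lemma isGraded_idealDeg (I : Ideal (MvPolynomial (Fin n) K)) : IsGraded K n (idealDeg I) := by
  intro e d p y hp hy
  rw [mem_idealDeg] at *
  refine ⟨I.mul_mem_left p hy.1, ?_⟩
  rw [add_comm]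
  exact hp.mul hy.2

/-- `I` is homogeneous and has a finite graded free resolution whose `i`-th term is generated in
degrees `≤ r + i`, that is, `reg I ≤ r`. -/
structure IdealReg (I : Ideal (MvPolynomial (Fin n) K)) (r : ℕ) : Prop where
  homog : ∀ p ∈ I, ∀ d, homogeneousComponent d p ∈ I
  res : ∃ l, RegLE K n l (MvPolynomial (Fin n) K) (idealDeg I) r

lemma idealReg_bot (r : ℕ) : IdealReg (⊥ : Ideal (MvPolynomial (Fin n) K)) r where
  homog := by
    intro p hp d
    rw [Ideal.mem_bot] at hp
    simp [hp]
  res := ⟨0, fun d => by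
    rw [eq_bot_iff]
    intro p hp
    exact hp.1⟩

lemma idealReg_top (r : ℕ) : IdealReg (⊤ : Ideal (MvPolynomial (Fin n) K)) r where
  homog := fun _ _ _ => trivial
  res := by
    refine ⟨1, 1, fun _ => 0, fun _ => 1, fun _ => Nat.zero_le _,
      fun _ => ⟨trivial, isHomogeneous_one _ _⟩, ?_, ?_⟩
    · intro d y hy
      exact ⟨fun _ => y, fun _ => Or.inr ⟨d, by simp, hy.2⟩, by simp⟩
    · intro d
      rw [eq_bot_iff]
      intro v hv
      rw [mem_syz] at hv
      have := hv.2
      simp only [Finset.univ_unique, smul_eq_mul, mul_one, Finset.sum_singleton] at this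
      rw [AddSubgroup.mem_bot]
      funext a
      rw [Subsingleton.elim a default]
      exact this

lemma IdealReg.mono {I : Ideal (MvPolynomial (Fin n) K)} {r r' : ℕ} (h : IdealReg I r)
    (hr : r ≤ r') : IdealReg I r' where
  homog := h.homog
  res := by
    obtain ⟨l, hl⟩ := h.res
    exact ⟨l, hl.mono le_rfl hr⟩

lemma homogeneousComponent_X_mul_zero (x : Fin n) (q : MvPolynomial (Fin n) K) :
    homogeneousComponent 0 (X x * q) = 0 := by
  classical simp [homogeneousComponent_zero, coeff_X_mul']

lemma homogeneousComponent_X_mul_succ (x : Fin n) (q : MvPolynomial (Fin n) K) (d : ℕ) :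
    homogeneousComponent (d + 1) (X x * q) = X x * homogeneousComponent d q := by
  classical
  ext m
  rw [coeff_homogeneousComponent, coeff_X_mul', coeff_X_mul', coeff_homogeneousComponent]
  by_cases hm : x ∈ m.support
  · obtain ⟨m', rfl⟩ : ∃ m', m = m' + Finsupp.single x 1 := by
      refine ⟨m - Finsupp.single x 1, (tsub_add_cancel_of_le ?_).symm⟩
      rw [Finsupp.single_le_iff]
      exact Nat.one_le_iff_ne_zero.2 (Finsupp.mem_support_iff.1 hm)
    simp [hm]
  · simp [hm]

/-- If `I = J + x L` with `J ⊆ L` and `x` is a nonzerodivisor modulo `J`, then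
`reg I ≤ max (reg J) (reg L + 1)`. This comes from the exact sequence
`0 → J(-1) → J ⊕ L(-1) → I → 0` with maps `a ↦ (x a, -a)` and `(j, l) ↦ j + x l`. -/
lemma idealReg_add {I J L : Ideal (MvPolynomial (Fin n) K)} {r : ℕ} (x : Fin n)
    (hJ : IdealReg J (r + 1)) (hL : IdealReg L r) (hJL : J ≤ L)
    (hx : ∀ p, X x * p ∈ J → p ∈ J)
    (hI : ∀ p, p ∈ I ↔ ∃ j ∈ J, ∃ l ∈ L, p = j + X x * l) : IdealReg I (r + 1) where
  homog := by
    intro p hp d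
    obtain ⟨j, hj, l, hl, rfl⟩ := (hI p).1 hp
    rw [hI, map_add]
    refine ⟨_, hJ.homog j hj d, ?_⟩
    cases d with
    | zero => exact ⟨0, zero_mem _, by rw [homogeneousComponent_X_mul_zero, mul_zero]⟩
    | succ d => exact ⟨_, hL.homog l hl d, by rw [homogeneousComponent_X_mul_succ]⟩
  res := by
    obtain ⟨l₁, h₁⟩ := hJ.res
    obtain ⟨l₂, h₂⟩ := hL.res
    have hX : (X x : MvPolynomial (Fin n) K) ≠ 0 := X_ne_zero x
    have hXh : (X x : MvPolynomial (Fin n) K).IsHomogeneous 1 := isHomogeneous_X _ _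
    refine ⟨max l₁ l₂ + 1, RegLE.third (A := shiftGr (idealDeg J))
      (B := fun d => (idealDeg J d).prod (shiftGr (idealDeg L) d))
      (LinearMap.prod (LinearMap.mulLeft _ (X x)) (-LinearMap.id))
      (LinearMap.coprod LinearMap.id (LinearMap.mulLeft _ (X x)))
      (isGraded_shiftGr (isGraded_idealDeg J)) ?_ ?_ ?_ ?_ ?_ ?_ ?_
      (h₁.shift.mono (le_max_left _ _) le_rfl)
      (RegLE.prod (isGraded_idealDeg J) (isGraded_shiftGr (isGraded_idealDeg L))
        (h₁.mono (by omega) le_rfl) (h₂.shift.mono (by omega) le_rfl))⟩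
    · intro e d p y hp hy
      exact ⟨isGraded_idealDeg J e d p _ hp hy.1,
        isGraded_shiftGr (isGraded_idealDeg L) e d p _ hp hy.2⟩
    · intro d a ha
      cases d with
      | zero =>
        have : a = 0 := ha
        subst this
        rw [map_zero]
        exact zero_mem _
      | succ d =>
        refine ⟨⟨J.mul_mem_left _ ha.1, ?_⟩, ⟨L.neg_mem (hJL ha.1), ?_⟩⟩
        · rw [add_comm]; exact hXh.mul ha.2
        · exact IsHomogeneous.neg ha.2
    · intro d a _ h
      have : -a = 0 := congrArg Prod.snd h
      simpa using this
    · rintro d ⟨j, l⟩ ⟨hj, hl⟩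
      have hj' : j ∈ idealDeg J d := hj
      have hl' : l ∈ shiftGr (idealDeg L) d := hl
      change j + X x * l ∈ idealDeg I d
      cases d with
      | zero =>
        have : l = 0 := hl'
        subst this
        rw [mul_zero, add_zero]
        exact ⟨(hI j).2 ⟨j, hj'.1, 0, zero_mem _, by simp⟩, hj'.2⟩
      | succ d =>
        refine ⟨(hI _).2 ⟨j, hj'.1, l, hl'.1, rfl⟩, IsHomogeneous.add hj'.2 ?_⟩
        rw [add_comm]; exact hXh.mul hl'.2
    · intro d c hc
      obtain ⟨j, hj, l, hl, rfl⟩ := (hI c).1 hc.1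
      have key := homogeneousComponent_of_mem (m := d) (n := d) hc.2
      rw [if_pos rfl, map_add] at key
      cases d with
      | zero =>
        refine ⟨(homogeneousComponent 0 j, 0), ⟨⟨hJ.homog j hj 0,
          homogeneousComponent_isHomogeneous _ _⟩, zero_mem _⟩, ?_⟩
        rw [homogeneousComponent_X_mul_zero, add_zero] at key
        change homogeneousComponent 0 j + X x * 0 = _
        rw [mul_zero, add_zero, key]
      | succ d =>
        refine ⟨(homogeneousComponent (d + 1) j, homogeneousComponent d l),
          ⟨⟨hJ.homog j hj _, homogeneousComponent_isHomogeneous _ _⟩,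
          ⟨hL.homog l hl _, homogeneousComponent_isHomogeneous _ _⟩⟩, ?_⟩
        rw [homogeneousComponent_X_mul_succ] at key
        exact key
    · intro d a _
      change X x * a + X x * (-a) = 0
      ring
    · rintro d ⟨j, l⟩ ⟨hj, hl⟩ h
      have hj' : j ∈ idealDeg J d := hj
      have hl' : l ∈ shiftGr (idealDeg L) d := hl
      have h' : j + X x * l = 0 := h
      have hjl : j = X x * (-l) := by linear_combination h'
      refine ⟨-l, ?_, ?_⟩
      · cases d with
        | zero =>
          have : l = 0 := hl'
          subst this
          simp [zero_mem]
        | succ d =>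
          refine ⟨hx _ (hjl ▸ hj'.1), IsHomogeneous.neg hl'.2⟩
      · change (X x * (-l), - -l) = (j, l)
        rw [← hjl, neg_neg]

end Algebra

/-! ### Free resolutions from inductive regularity bounds -/

section Extraction
variable {K : Type} [Field K] {n : ℕ}

/-- A graded free resolution of the graded module with pieces `gr d ⊆ M`, having at most `l` terms,
the `i`-th generated in degrees `≤ r + i`. Surjectivity and exactness are only required
degree by degree. -/
structure Res (K : Type) [Field K] (n l : ℕ) (M : Type) [AddCommGroup M]
    [Module (MvPolynomial (Fin n) K) M] (gr : ℕ → AddSubgroup M) (r : ℕ) where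
  rank : ℕ → ℕ
  rank_zero : ∀ i, l ≤ i → rank i = 0
  shift : (i : ℕ) → Fin (rank i) → ℕ
  d : (i : ℕ) →
    ((Fin (rank (i + 1)) → MvPolynomial (Fin n) K) →ₗ[MvPolynomial (Fin n) K]
      (Fin (rank i) → MvPolynomial (Fin n) K))
  aug : (Fin (rank 0) → MvPolynomial (Fin n) K) →ₗ[MvPolynomial (Fin n) K] M
  shift_le : ∀ i a, shift i a ≤ r + i
  aug_mem : ∀ a, aug (Pi.single a 1) ∈ gr (shift 0 a)
  aug_surj : ∀ e, ∀ y ∈ gr e, ∃ v ∈ freeDeg K n (shift 0) e, aug v = y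
  aug_d : ∀ w, aug (d 0 w) = 0
  d_mem : ∀ i b, d i (Pi.single b 1) ∈ freeDeg K n (shift i) (shift (i + 1) b)
  d_d : ∀ i w, d i (d (i + 1) w) = 0
  exact_zero : ∀ e, ∀ v ∈ freeDeg K n (shift 0) e, aug v = 0 → ∃ w, d 0 w = v
  exact_succ : ∀ i e, ∀ v ∈ freeDeg K n (shift (i + 1)) e, d i v = 0 → ∃ w, d (i + 1) w = v

lemma linearMap_eq_sum {m : ℕ} {M : Type} [AddCommGroup M] [Module (MvPolynomial (Fin n) K) M]
    (φ : (Fin m → MvPolynomial (Fin n) K) →ₗ[MvPolynomial (Fin n) K] M)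
    (v : Fin m → MvPolynomial (Fin n) K) : φ v = ∑ a, v a • φ (Pi.single a 1) := by
  rw [LinearMap.pi_apply_eq_sum_univ φ v]
  refine Finset.sum_congr rfl fun a _ => ?_
  congr 2
  funext j
  simp [Pi.single_apply, eq_comm]

/-- Splicing: the generators of the module are put in front of a resolution of their syzygies. -/
lemma RegLE.exists_res {l : ℕ} : ∀ {M : Type} [AddCommGroup M]
    [Module (MvPolynomial (Fin n) K) M] {gr : ℕ → AddSubgroup M} {r : ℕ},
    RegLE K n l M gr r → Nonempty (Res K n l M gr r) := by
  induction l with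
  | zero =>
    intro M _ _ gr r h
    refine ⟨⟨fun _ => 0, fun _ _ => rfl, fun _ => Fin.elim0, fun _ => 0, 0,
      fun _ a => a.elim0, fun a => a.elim0, ?_, fun _ => rfl, fun _ a => a.elim0, fun _ _ => rfl,
      fun _ v _ _ => ⟨0, Subsingleton.elim _ _⟩, fun _ _ v _ _ => ⟨0, Subsingleton.elim _ _⟩⟩⟩
    intro e y hy
    rw [h, AddSubgroup.mem_bot] at hy
    exact ⟨0, zero_mem _, hy.symm⟩
  | succ l ih =>
    intro M _ _ gr r h
    obtain ⟨m, s, g, hs, hg, hsur, ht⟩ := h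
    obtain ⟨T⟩ := ih ht
    have hT : ∀ w, T.aug w ∈
        LinearMap.ker (Fintype.linearCombination (MvPolynomial (Fin n) K) g) := by
      intro w
      rw [linearMap_eq_sum]
      refine Submodule.sum_mem _ fun a _ => Submodule.smul_mem _ _ ?_
      exact (T.aug_mem a).2
    refine ⟨⟨fun | 0 => m | i + 1 => T.rank i, ?_, fun | 0 => s | i + 1 => T.shift i,
      fun | 0 => T.aug | i + 1 => T.d i, Fintype.linearCombination _ g, ?_, ?_, ?_, ?_, ?_, ?_,
      ?_, ?_⟩⟩
    · intro i hi
      cases i with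
      | zero => omega
      | succ i => exact T.rank_zero i (by omega)
    · intro i a
      cases i with
      | zero => exact hs a
      | succ i => have := T.shift_le i a; dsimp only at this ⊢; omega
    · intro a
      have : Fintype.linearCombination (MvPolynomial (Fin n) K) g (Pi.single a 1) ∈ gr (s a) := by
        rw [Fintype.linearCombination_apply_single, one_smul]
        exact hg a
      exact this
    · intro e y hy
      obtain ⟨v, hv, hvy⟩ := hsur e y hy
      exact ⟨v, hv, by simpa [Fintype.linearCombination_apply] using hvy⟩
    · exact hT
    · intro i b
      cases i with
      | zero => exact (T.aug_mem b).1
      | succ i => exact T.d_mem i b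
    · intro i w
      cases i with
      | zero => exact T.aug_d w
      | succ i => exact T.d_d i w
    · intro e v hv h0
      obtain ⟨w, _, hw⟩ := T.aug_surj e v ⟨hv, h0⟩
      exact ⟨w, hw⟩
    · intro i e v hv h0
      cases i with
      | zero => exact T.exact_zero e v hv h0
      | succ i => exact T.exact_succ i e v hv h0

/-- Finite sums of elements of distinct degrees vanish only termwise. -/
def Indep {M : Type} [AddCommGroup M] (gr : ℕ → AddSubgroup M) : Prop :=
  ∀ (k : ℕ) (y : ℕ → M), (∀ e, y e ∈ gr e) → ∑ e ∈ Finset.range k, y e = 0 →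
    ∀ e < k, y e = 0

lemma indep_homogeneous {k : ℕ} {y : ℕ → MvPolynomial (Fin n) K} {t : ℕ}
    (hy : ∀ e, y e = 0 ∨ ∃ f, e = t + f ∧ (y e).IsHomogeneous f)
    (h0 : ∑ e ∈ Finset.range k, y e = 0) (e : ℕ) (he : e < k) : y e = 0 := by
  rcases hy e with h | ⟨f, hf, h⟩
  · exact h
  have h1 := congrArg (homogeneousComponent f) h0
  rw [map_sum, map_zero, Finset.sum_eq_single e] at h1
  · rwa [homogeneousComponent_of_mem h, if_pos rfl] at h1
  · intro e' _ hne
    rcases hy e' with h' | ⟨f', hf', h'⟩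
    · simp [h']
    · rw [homogeneousComponent_of_mem h', if_neg (by omega)]
  · intro h'
    exact absurd (Finset.mem_range.2 he) h'

lemma indep_freeDeg {m : ℕ} (s : Fin m → ℕ) : Indep (freeDeg K n s) := by
  intro k y hy h0 e he
  funext a
  refine indep_homogeneous (t := s a) (y := fun e => y e a) (fun e => hy e a) ?_ e he
  have := congrFun h0 a
  simpa using this

lemma indep_idealDeg (I : Ideal (MvPolynomial (Fin n) K)) : Indep (idealDeg I) := by
  intro k y hy h0 e he
  exact indep_homogeneous (t := 0) (fun e => Or.inr ⟨e, (zero_add e).symm, (hy e).2⟩) h0 e he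

lemma sum_range_homogeneousComponent (p : MvPolynomial (Fin n) K) {t : ℕ}
    (ht : p.totalDegree < t) : ∑ j ∈ Finset.range t, homogeneousComponent j p = p := by
  conv_rhs => rw [← sum_homogeneousComponent p]
  refine (Finset.sum_subset (Finset.range_mono ht) fun j _ hj => ?_).symm
  exact homogeneousComponent_eq_zero _ _ (by simpa using hj)

/-- Every vector of a graded free module is a finite sum of homogeneous vectors. -/
lemma exists_decomp {m : ℕ} (s : Fin m → ℕ) (v : Fin m → MvPolynomial (Fin n) K) :
    ∃ (k : ℕ) (c : ℕ → Fin m → MvPolynomial (Fin n) K),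
      (∀ e, c e ∈ freeDeg K n s e) ∧ v = ∑ e ∈ Finset.range k, c e := by
  refine ⟨∑ a, (s a + ((v a).totalDegree + 1)),
    fun e a => if s a ≤ e then homogeneousComponent (e - s a) (v a) else 0, ?_, ?_⟩
  · intro e a
    by_cases h : s a ≤ e
    · refine Or.inr ⟨e - s a, by omega, ?_⟩
      simp only [if_pos h]
      exact homogeneousComponent_isHomogeneous _ _
    · exact Or.inl (if_neg h)
  · funext a
    have hle := Finset.single_le_sum (f := fun a => s a + ((v a).totalDegree + 1))
      (fun _ _ => Nat.zero_le _) (Finset.mem_univ a)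
    obtain ⟨t, ht⟩ := Nat.exists_eq_add_of_le hle
    rw [ht, Finset.sum_apply, add_assoc, Finset.sum_range_add, Finset.sum_eq_zero, zero_add]
    · simp only [Nat.le_add_right, if_true, Nat.add_sub_cancel_left]
      exact (sum_range_homogeneousComponent _ (by omega)).symm
    · intro e he
      exact if_neg (by have := Finset.mem_range.1 he; omega)

/-- Exactness in each degree implies exactness, by decomposing into homogeneous components. -/
lemma ker_eq_range {m m' : ℕ} {N : Type} [AddCommGroup N] [Module (MvPolynomial (Fin n) K) N]
    {gN : ℕ → AddSubgroup N} (hg : IsGraded K n gN) (hind : Indep gN) {s : Fin m → ℕ}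
    (φ : (Fin m → MvPolynomial (Fin n) K) →ₗ[MvPolynomial (Fin n) K] N)
    (ψ : (Fin m' → MvPolynomial (Fin n) K) →ₗ[MvPolynomial (Fin n) K]
      (Fin m → MvPolynomial (Fin n) K))
    (hφ : ∀ a, φ (Pi.single a 1) ∈ gN (s a)) (hcomp : ∀ w, φ (ψ w) = 0)
    (hex : ∀ e, ∀ v ∈ freeDeg K n s e, φ v = 0 → ∃ w, ψ w = v) :
    LinearMap.ker φ = LinearMap.range ψ := by
  ext v
  constructor
  · intro hv
    obtain ⟨k, c, hc, rfl⟩ := exists_decomp s v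
    rw [LinearMap.mem_ker, map_sum] at hv
    refine Submodule.sum_mem _ fun e he => ?_
    refine hex e _ (hc e) (hind k (fun e => φ (c e)) (fun e => ?_) hv e (Finset.mem_range.1 he))
    rw [linearMap_eq_sum φ]
    exact hg.sum_mem hφ (hc e)
  · rintro ⟨w, rfl⟩
    exact hcomp w

/-- Homogeneity of `I` makes the degreewise resolution one of the whole ideal. -/
lemma IdealReg.exists_gradedFreeRes {I : Ideal (MvPolynomial (Fin n) K)} {r : ℕ}
    (h : IdealReg I r) : ∃ F : GradedFreeRes K I,
      ∀ i, ∀ a : Fin (F.rank i), (F.shift i a : ℤ) - (i : ℤ) ≤ (r : ℤ) := by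
  obtain ⟨l, hl⟩ := h.res
  obtain ⟨T⟩ := hl.exists_res
  refine ⟨⟨l, T.rank, fun i hi => T.rank_zero i hi.le, T.shift, T.d, T.aug, ?_, ?_, ?_, ?_, ?_⟩, ?_⟩
  · ext p
    constructor
    · rintro ⟨v, rfl⟩
      rw [linearMap_eq_sum]
      exact Submodule.sum_mem _ fun a _ => Submodule.smul_mem _ _ (T.aug_mem a).1
    · intro hp
      rw [← sum_homogeneousComponent p]
      refine Submodule.sum_mem _ fun d _ => ?_
      obtain ⟨v, _, hv⟩ := T.aug_surj d _
        ⟨h.homog p hp d, homogeneousComponent_isHomogeneous _ _⟩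
      exact ⟨v, hv⟩
  · exact ker_eq_range (isGraded_idealDeg I) (indep_idealDeg I) _ _ T.aug_mem T.aug_d T.exact_zero
  · intro i
    exact ker_eq_range (isGraded_freeDeg _) (indep_freeDeg _) _ _ (T.d_mem i) (T.d_d i)
      (T.exact_succ i)
  · intro a
    exact (T.aug_mem a).2
  · intro i b a
    exact T.d_mem i b a
  · intro i a
    have := T.shift_le i a
    dsimp only
    omega

end Extraction

/-! ### Simplicial vertices of chordal graphs -/

section Dirac
variable {V : Type}

/-- The induced subgraph of `H` on `T`, kept as a graph on all of `V`: vertices outside `T` become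
isolated. -/
def restr (H : SimpleGraph V) (T : Set V) : SimpleGraph V where
  Adj a b := H.Adj a b ∧ a ∈ T ∧ b ∈ T
  symm := ⟨fun _ _ h => ⟨h.1.symm, h.2.2, h.2.1⟩⟩
  loopless := ⟨fun _ h => H.loopless.irrefl _ h.1⟩

/-- Let `s ≠ t` be neighbours of `v` in a chordal graph, connected by a walk avoiding `v` and its
other neighbours. Then `s` and `t` are adjacent: otherwise a shortest such walk, closed up
through `v`, is a chordless cycle of length at least 4. -/
lemma chordal_separator {H : SimpleGraph V} (hH : Chordal H) {v s t : V} {T : Set V}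
    (hT : ∀ y ∈ T, y ≠ v ∧ (H.Adj v y → y = s ∨ y = t)) (hsT : s ∈ T) (htT : t ∈ T)
    (hvs : H.Adj v s) (hvt : H.Adj v t) (hst : s ≠ t) (hr : (restr H T).Reachable s t) :
    H.Adj s t := by
  classical
  by_contra hnst
  obtain ⟨w, hw⟩ := hr.exists_walk_length_eq_dist
  have hpath : w.IsPath := w.isPath_of_length_eq_dist hw
  have hle : restr H T ≤ H := fun _ _ h => h.1
  have hget : ∀ i, w.getVert i ∈ T := by
    intro i
    by_cases hi : i < w.length
    · exact (w.adj_getVert_succ hi).2.1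
    · rw [w.getVert_of_length_le (not_lt.1 hi)]; exact htT
  have hsupp : ∀ y ∈ w.support, y ∈ T := by
    intro y hy
    obtain ⟨i, rfl, _⟩ := SimpleGraph.Walk.mem_support_iff_exists_getVert.1 hy
    exact hget i
  -- a chord of the shortest walk `w` would shorten it
  have hchord : ∀ i j, i < j → j ≤ w.length → H.Adj (w.getVert i) (w.getVert j) →
      s(w.getVert i, w.getVert j) ∈ w.edges := by
    intro i j hij hj hadj
    by_cases hj' : j = i + 1
    · subst hj'
      rw [SimpleGraph.Walk.mk_mem_edges_iff_exists]
      exact ⟨i, by omega, rfl⟩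
    · exfalso
      have hadj' : (restr H T).Adj (w.getVert i) (w.getVert j) := ⟨hadj, hget i, hget j⟩
      have := SimpleGraph.dist_le ((w.take i).append (SimpleGraph.Walk.cons hadj' (w.drop j)))
      simp only [SimpleGraph.Walk.length_append, SimpleGraph.Walk.length_cons,
        SimpleGraph.Walk.take_length, SimpleGraph.Walk.drop_length] at this
      omega
  have hlen : 2 ≤ w.length := by
    by_contra hlt
    have h1 : w.length = 0 ∨ w.length = 1 := by omega
    rcases h1 with h1 | h1
    · exact hst (SimpleGraph.Walk.eq_of_length_eq_zero h1)
    · exact hnst (hle (SimpleGraph.Walk.adj_of_length_eq_one h1))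
  let c : H.Walk v v := SimpleGraph.Walk.cons hvs ((w.mapLe hle).concat hvt.symm)
  have hvw : v ∉ w.support := fun h => (hT v (hsupp v h)).1 rfl
  have hsuppc : ∀ y, y ∈ c.support ↔ y = v ∨ y ∈ w.support := by
    intro y
    simp only [c, SimpleGraph.Walk.support_cons, SimpleGraph.Walk.support_concat,
      SimpleGraph.Walk.support_mapLe_eq_support, List.mem_cons, List.mem_append]
    tauto
  have hedgec : ∀ e, e ∈ c.edges ↔ e = s(v, s) ∨ e = s(v, t) ∨ e ∈ w.edges := by
    intro e
    simp only [c, SimpleGraph.Walk.edges_cons, SimpleGraph.Walk.edges_concat,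
      SimpleGraph.Walk.edges_mapLe_eq_edges, List.concat_eq_append, List.mem_cons, List.mem_append,
      Sym2.eq_swap (a := t)]
    simp
    tauto
  have hc : c.IsCycle := by
    rw [SimpleGraph.Walk.cons_isCycle_iff]
    refine ⟨?_, ?_⟩
    · rw [SimpleGraph.Walk.concat_isPath_iff]
      refine ⟨hpath.mapLe hle, ?_⟩
      rwa [SimpleGraph.Walk.support_mapLe_eq_support]
    · rw [SimpleGraph.Walk.edges_concat, SimpleGraph.Walk.edges_mapLe_eq_edges, List.concat_eq_append,
        List.mem_append, not_or]
      refine ⟨fun h => hvw (w.fst_mem_support_of_mem_edges h), ?_⟩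
      simp only [List.mem_singleton, Sym2.eq_iff]
      rintro (⟨h, _⟩ | ⟨_, h⟩)
      · exact hvt.ne h
      · exact hst h
  obtain ⟨a, b, ha, hb, hab, hne⟩ := hH v c hc (by simp [c]; omega)
  have hvcase : ∀ y ∈ w.support, H.Adj v y → s(v, y) ∈ c.edges := by
    intro y hy hvy
    rw [hedgec]
    rcases (hT y (hsupp y hy)).2 hvy with rfl | rfl <;> simp
  rw [hsuppc] at ha hb
  rcases ha with rfl | ha
  · rcases hb with rfl | hb
    · exact hab.ne rfl
    · exact hne (hvcase b hb hab)
  · rcases hb with rfl | hb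
    · exact hne (by rw [Sym2.eq_swap]; exact hvcase a ha hab.symm)
    · obtain ⟨i, rfl, hi⟩ := SimpleGraph.Walk.mem_support_iff_exists_getVert.1 ha
      obtain ⟨j, rfl, hj⟩ := SimpleGraph.Walk.mem_support_iff_exists_getVert.1 hb
      refine hne ((hedgec _).2 (Or.inr (Or.inr ?_)))
      rcases lt_trichotomy i j with h | h | h
      · exact hchord i j h hj hab
      · exact absurd (h ▸ rfl) hab.ne
      · rw [Sym2.eq_swap]; exact hchord j i h hi hab.symm

/-- The neighbours of `x` within `W` form a clique. -/
def SimplicialIn (H : SimpleGraph V) (W : Finset V) (x : V) : Prop :=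
  ∀ a ∈ W, ∀ b ∈ W, H.Adj x a → H.Adj x b → a ≠ b → H.Adj a b

/-- Dirac's theorem in a form suited to induction: in an induced subgraph `W` of a chordal graph, if
`v` is not adjacent to all other vertices, some simplicial vertex is different from and not adjacent
to `v`. Let `C` be a component of the non-neighbours of `v` and `S` the neighbours of `v` adjacent
to `C`. Then `S` is a clique by `chordal_separator`, and the induction hypothesis for `C ∪ S`
yields a simplicial vertex in `C`. -/
lemma exists_simplicial_not_adj {H : SimpleGraph V} (hH : Chordal H) (W : Finset V) :
    ∀ v ∈ W, (∃ y ∈ W, y ≠ v ∧ ¬ H.Adj v y) →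
      ∃ x ∈ W, x ≠ v ∧ ¬ H.Adj v x ∧ SimplicialIn H W x := by
  classical
  induction W using Finset.strongInduction with
  | H W ih =>
  rintro v hv ⟨c₀, hc₀W, hc₀v, hc₀⟩
  let T : Set V := {y | y ∈ W ∧ y ≠ v ∧ ¬ H.Adj v y}
  let C : Finset V := {y ∈ W | y ≠ v ∧ ¬ H.Adj v y ∧ (restr H T).Reachable c₀ y}
  let S : Finset V := {y ∈ W | H.Adj v y ∧ ∃ c ∈ C, H.Adj y c}
  have hC : ∀ y, y ∈ C ↔ y ∈ W ∧ y ≠ v ∧ ¬ H.Adj v y ∧ (restr H T).Reachable c₀ y := by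
    intro y; simp [C]
  have hS : ∀ y, y ∈ S ↔ y ∈ W ∧ H.Adj v y ∧ ∃ c ∈ C, H.Adj y c := by
    intro y; simp [S]
  have hc₀C : c₀ ∈ C := (hC _).2 ⟨hc₀W, hc₀v, hc₀, SimpleGraph.Reachable.refl _⟩
  have hCT : ∀ y ∈ C, y ∈ T := fun y hy => by
    have := (hC y).1 hy
    exact ⟨this.1, this.2.1, this.2.2.1⟩
  have hSclique : ∀ s ∈ S, ∀ t ∈ S, s ≠ t → H.Adj s t := by
    intro s hs t ht hst
    obtain ⟨hsW, hvs, cs, hcs, hscs⟩ := (hS s).1 hs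
    obtain ⟨htW, hvt, ct, hct, htct⟩ := (hS t).1 ht
    refine chordal_separator hH (v := v) (T := T ∪ {s, t}) ?_ (by simp) (by simp) hvs hvt hst ?_
    · rintro y (hy | hy)
      · exact ⟨hy.2.1, fun h => absurd h hy.2.2⟩
      · rcases hy with rfl | rfl
        · exact ⟨hvs.ne', fun _ => Or.inl rfl⟩
        · exact ⟨hvt.ne', fun _ => Or.inr rfl⟩
    · have hmono : restr H T ≤ restr H (T ∪ {s, t}) :=
        fun _ _ h => ⟨h.1, Or.inl h.2.1, Or.inl h.2.2⟩
      have h1 : (restr H (T ∪ {s, t})).Adj s cs := ⟨hscs, by simp, Or.inl (hCT _ hcs)⟩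
      have h2 : (restr H (T ∪ {s, t})).Adj ct t := ⟨htct.symm, Or.inl (hCT _ hct), by simp⟩
      have h3 : (restr H T).Reachable cs ct :=
        ((hC cs).1 hcs).2.2.2.symm.trans ((hC ct).1 hct).2.2.2
      exact h1.reachable.trans ((h3.mono hmono).trans h2.reachable)
  have hnbr : ∀ c ∈ C, ∀ y ∈ W, H.Adj c y → y ∈ C ∪ S := by
    intro c hc y hy hcy
    obtain ⟨hcW, hcv, hvc, hcr⟩ := (hC c).1 hc
    rw [Finset.mem_union]
    by_cases hvy : H.Adj v y
    · exact Or.inr ((hS y).2 ⟨hy, hvy, c, hc, hcy.symm⟩)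
    · have hyv : y ≠ v := by rintro rfl; exact hvc hcy.symm
      have : (restr H T).Adj c y := ⟨hcy, hCT c hc, hy, hyv, hvy⟩
      exact Or.inl ((hC y).2 ⟨hy, hyv, hvy, hcr.trans this.reachable⟩)
  have hsub : C ∪ S ⊂ W := by
    refine (Finset.ssubset_iff_of_subset ?_).2 ⟨v, hv, ?_⟩
    · intro y hy
      rcases Finset.mem_union.1 hy with h | h
      · exact ((hC y).1 h).1
      · exact ((hS y).1 h).1
    · intro h
      rcases Finset.mem_union.1 h with h | h
      · exact ((hC v).1 h).2.1 rfl
      · exact ((hS v).1 h).2.1.ne rfl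
  -- it is enough to find a simplicial vertex of `C ∪ S` lying in `C`
  suffices h : ∃ x ∈ C, SimplicialIn H (C ∪ S) x by
    obtain ⟨x, hxC, hx⟩ := h
    obtain ⟨hxW, hxv, hvx, _⟩ := (hC x).1 hxC
    exact ⟨x, hxW, hxv, hvx, fun a ha b hb hxa hxb =>
      hx a (hnbr x hxC a ha hxa) b (hnbr x hxC b hb hxb) hxa hxb⟩
  by_cases hSu : ∃ s ∈ S, ∃ y ∈ C ∪ S, y ≠ s ∧ ¬ H.Adj s y
  · obtain ⟨s, hs, hy⟩ := hSu
    obtain ⟨x, hx, hxs, hsx, hxsim⟩ := ih _ hsub s (Finset.mem_union_right _ hs) hy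
    refine ⟨x, (Finset.mem_union.1 hx).resolve_right fun h => ?_, hxsim⟩
    exact hsx (hSclique s hs x h hxs.symm)
  -- here every vertex of `S` is adjacent to all other vertices of `C ∪ S`
  · push Not at hSu
    by_cases hCu : ∃ c ∈ C, ∃ y ∈ C ∪ S, y ≠ c ∧ ¬ H.Adj c y
    · obtain ⟨c, hc, hy⟩ := hCu
      obtain ⟨x, hx, hxc, hcx, hxsim⟩ := ih _ hsub c (Finset.mem_union_left _ hc) hy
      refine ⟨x, (Finset.mem_union.1 hx).resolve_right fun h => ?_, hxsim⟩
      exact hcx (hSu x h c (Finset.mem_union_left _ hc) hxc.symm).symm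
    · push Not at hCu
      refine ⟨c₀, hc₀C, fun a ha b hb _ _ hab => ?_⟩
      rcases Finset.mem_union.1 ha with h | h
      · exact hCu a h b hb hab.symm
      · exact hSu a h b hb hab.symm

/-- Dirac's theorem: every nonempty induced subgraph of a chordal graph has a simplicial vertex. -/
lemma exists_simplicial {H : SimpleGraph V} (hH : Chordal H) {W : Finset V} (hW : W.Nonempty) :
    ∃ x ∈ W, SimplicialIn H W x := by
  by_cases h : ∃ v ∈ W, ∃ y ∈ W, y ≠ v ∧ ¬ H.Adj v y
  · obtain ⟨v, hv, hy⟩ := h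
    obtain ⟨x, hx, _, _, hs⟩ := exists_simplicial_not_adj hH W v hv hy
    exact ⟨x, hx, hs⟩
  · push Not at h
    obtain ⟨x, hx⟩ := hW
    exact ⟨x, hx, fun a ha b hb _ _ hab => h a ha b hb hab.symm⟩

/-- A graph with at most one edge is co-chordal: in a cycle `v₀ v₁ v₂ v₃ v₄ …` (with `v₀ = v₄`
when it has length 4) of the complement, at most one of the pairs `v₁ v₃` and `v₂ v₄` fails to be
a chord. -/
lemma chordal_compl_of_subsingleton {A : SimpleGraph V}
    (hA : ∀ a b c d, A.Adj a b → A.Adj c d → s(a, b) = s(c, d)) : Chordal Aᶜ := by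
  intro v w hw hlen
  have hinj := hw.getVert_injOn
  have h0 : w.getVert 0 = w.getVert w.length := by simp
  -- the vertices of the cycle are distinct when indexed from `1` to its length; `key0` moves
  -- the index `0` to the length
  have key : ∀ i j, 1 ≤ i → i ≤ w.length → 1 ≤ j → j ≤ w.length →
      w.getVert i = w.getVert j → i = j :=
    fun i j h1 h2 h3 h4 h => hinj ⟨h1, h2⟩ ⟨h3, h4⟩ h
  have key0 : ∀ i, i < w.length → ∃ i', 1 ≤ i' ∧ i' ≤ w.length ∧ (i' = i ∨ i = 0 ∧ i' = w.length) ∧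
      w.getVert i = w.getVert i' := by
    intro i hi
    by_cases h : i = 0
    · subst h; exact ⟨w.length, by omega, le_rfl, Or.inr ⟨rfl, rfl⟩, h0⟩
    · exact ⟨i, by omega, hi.le, Or.inl rfl, rfl⟩
  -- vertices that are not consecutive on the cycle do not span one of its edges
  have hne : ∀ i j, 1 ≤ i → i + 2 ≤ j → j ≤ w.length → (i = 1 → j < w.length) →
      s(w.getVert i, w.getVert j) ∉ w.edges := by
    intro i j hi hij hj h1 hmem
    rw [SimpleGraph.Walk.mk_mem_edges_iff_exists] at hmem
    obtain ⟨k, hk, he⟩ := hmem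
    obtain ⟨k', hk1, hk2, hk3, hk4⟩ := key0 k hk
    rw [hk4, Sym2.eq_iff] at he
    rcases he with ⟨e1, e2⟩ | ⟨e1, e2⟩
    · have := key _ _ (by omega) (by omega) (by omega) (by omega) e1
      have := key _ _ (by omega) (by omega) (by omega) (by omega) e2
      omega
    · have := key _ _ (by omega) (by omega) (by omega) (by omega) e1
      have := key _ _ (by omega) (by omega) (by omega) (by omega) e2
      omega
  have hd : ∀ i j, 1 ≤ i → i < j → j ≤ w.length → w.getVert i ≠ w.getVert j := by
    intro i j h1 h2 h3 h
    have := key _ _ h1 (by omega) (by omega) h3 h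
    omega
  by_cases h13 : A.Adj (w.getVert 1) (w.getVert 3)
  · refine ⟨w.getVert 2, w.getVert 4, w.getVert_mem_support _, w.getVert_mem_support _, ?_,
      hne 2 4 (by omega) (by omega) hlen (by omega)⟩
    rw [SimpleGraph.compl_adj]
    refine ⟨hd 2 4 (by omega) (by omega) hlen, fun h24 => ?_⟩
    have := hA _ _ _ _ h13 h24
    rw [Sym2.eq_iff] at this
    rcases this with ⟨e, _⟩ | ⟨e, _⟩
    · exact hd 1 2 (by omega) (by omega) (by omega) e
    · exact hd 1 4 (by omega) (by omega) (by omega) e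
  · refine ⟨w.getVert 1, w.getVert 3, w.getVert_mem_support _, w.getVert_mem_support _, ?_,
      hne 1 3 (by omega) (by omega) (by omega) (by omega)⟩
    rw [SimpleGraph.compl_adj]
    exact ⟨hd 1 3 (by omega) (by omega) (by omega), h13⟩

end Dirac

/-! ### Edge ideals -/

section EdgeIdeals
variable {K : Type} [Field K] {n : ℕ}

/-- The exponents of the edge monomials `x_i x_j` of `G[W]` and of the variables in `U`. -/
def gens (G : SimpleGraph (Fin n)) (W U : Finset (Fin n)) : Set (Fin n →₀ ℕ) :=
  {m | (∃ i ∈ W, ∃ j ∈ W, G.Adj i j ∧ m = Finsupp.single i 1 + Finsupp.single j 1) ∨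
    ∃ u ∈ U, m = Finsupp.single u 1}

variable (K) in
/-- The ideal `I(G[W]) + (x_u : u ∈ U)`. -/
noncomputable def edgeVarIdeal (G : SimpleGraph (Fin n)) (W U : Finset (Fin n)) :
    Ideal (MvPolynomial (Fin n) K) :=
  Ideal.span ((fun m => monomial m (1 : K)) '' gens G W U)

lemma monomial_pair (i j : Fin n) :
    monomial (Finsupp.single i 1 + Finsupp.single j 1) (1 : K) = X i * X j := by
  rw [X, X, monomial_mul, one_mul]

lemma edge_mem {G : SimpleGraph (Fin n)} {W U : Finset (Fin n)} {i j : Fin n} (hi : i ∈ W)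
    (hj : j ∈ W) (h : G.Adj i j) : X i * X j ∈ edgeVarIdeal K G W U := by
  rw [← monomial_pair]
  exact Ideal.subset_span ⟨_, Or.inl ⟨i, hi, j, hj, h, rfl⟩, rfl⟩

lemma var_mem {G : SimpleGraph (Fin n)} {W U : Finset (Fin n)} {u : Fin n} (hu : u ∈ U) :
    X u ∈ edgeVarIdeal K G W U :=
  Ideal.subset_span ⟨_, Or.inr ⟨u, hu, rfl⟩, rfl⟩

lemma edgeVarIdeal_le {G : SimpleGraph (Fin n)} {W U : Finset (Fin n)}
    {I : Ideal (MvPolynomial (Fin n) K)}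
    (h : ∀ i ∈ W, ∀ j ∈ W, G.Adj i j → X i * X j ∈ I) (h' : ∀ u ∈ U, X u ∈ I) :
    edgeVarIdeal K G W U ≤ I := by
  rw [edgeVarIdeal, Ideal.span_le]
  rintro _ ⟨m, (⟨i, hi, j, hj, hij, rfl⟩ | ⟨u, hu, rfl⟩), rfl⟩
  · simp only [monomial_pair]
    exact h i hi j hj hij
  · exact h' u hu

/-- A variable occurring in no generator is a nonzerodivisor modulo the monomial ideal. -/
lemma mem_of_X_mul_mem {G : SimpleGraph (Fin n)} {W U : Finset (Fin n)} {x : Fin n}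
    (hW : x ∉ W) (hU : x ∉ U) (p : MvPolynomial (Fin n) K)
    (hp : X x * p ∈ edgeVarIdeal K G W U) : p ∈ edgeVarIdeal K G W U := by
  classical
  rw [edgeVarIdeal, mem_ideal_span_monomial_image] at hp ⊢
  intro m hm
  obtain ⟨g, hg, hle⟩ := hp (Finsupp.single x 1 + m) (by
    rw [support_X_mul, Finset.mem_map]
    exact ⟨m, hm, rfl⟩)
  have hgx : g x = 0 := by
    rcases hg with ⟨i, hi, j, hj, _, rfl⟩ | ⟨u, hu, rfl⟩
    · have h1 : i ≠ x := fun h => hW (h ▸ hi)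
      have h2 : j ≠ x := fun h => hW (h ▸ hj)
      simp [h1, h2]
    · have h1 : u ≠ x := fun h => hU (h ▸ hu)
      simp [h1]
  refine ⟨g, hg, fun y => ?_⟩
  by_cases hy : y = x
  · subst hy; omega
  · have := hle y
    simpa [Ne.symm hy] using this

/-- The recursion step. With `J = I(G[W \ x]) + (U)` and `L = I(G[W \ N[x]]) + (U ∪ N(x))`
one has `I(G[W]) + (U) = J + x L`, so `idealReg_add` applies. -/
lemma idealReg_step {G : SimpleGraph (Fin n)} {W U : Finset (Fin n)} {x : Fin n} {r : ℕ}
    {N W' : Finset (Fin n)} (hxW : x ∈ W) (hxU : x ∉ U)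
    (hN : ∀ y, y ∈ N ↔ y ∈ W ∧ G.Adj x y)
    (hW' : ∀ y, y ∈ W' ↔ y ∈ W ∧ y ≠ x ∧ ¬ G.Adj x y)
    (hJ : IdealReg (edgeVarIdeal K G (W.erase x) U) (r + 1))
    (hL : IdealReg (edgeVarIdeal K G W' (U ∪ N)) r) :
    IdealReg (edgeVarIdeal K G W U) (r + 1) := by
  have hJI : edgeVarIdeal K G (W.erase x) U ≤ edgeVarIdeal K G W U :=
    edgeVarIdeal_le (fun i hi j hj => edge_mem (Finset.mem_of_mem_erase hi)
      (Finset.mem_of_mem_erase hj)) fun u hu => var_mem hu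
  refine idealReg_add x hJ hL ?_ (mem_of_X_mul_mem (Finset.notMem_erase _ _) hxU) ?_
  · refine edgeVarIdeal_le (fun i hi j hj hij => ?_)
      fun u hu => var_mem (Finset.mem_union_left _ hu)
    rw [Finset.mem_erase] at hi hj
    by_cases h1 : G.Adj x i
    · exact Ideal.mul_mem_right _ _
        (var_mem (Finset.mem_union_right _ ((hN i).2 ⟨hi.2, h1⟩)))
    by_cases h2 : G.Adj x j
    · exact Ideal.mul_mem_left _ _
        (var_mem (Finset.mem_union_right _ ((hN j).2 ⟨hj.2, h2⟩)))
    exact edge_mem ((hW' i).2 ⟨hi.2, hi.1, h1⟩) ((hW' j).2 ⟨hj.2, hj.1, h2⟩) hij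
  · intro p
    constructor
    · intro hp
      have hle : edgeVarIdeal K G W U ≤ edgeVarIdeal K G (W.erase x) U ⊔
          Ideal.span {X x} * edgeVarIdeal K G W' (U ∪ N) := by
        have hxN : ∀ y ∈ W, G.Adj x y → (X x * X y : MvPolynomial (Fin n) K) ∈
            edgeVarIdeal K G (W.erase x) U ⊔
              Ideal.span {X x} * edgeVarIdeal K G W' (U ∪ N) := fun y hy hxy =>
          Ideal.mem_sup_right (Ideal.mul_mem_mul (Ideal.mem_span_singleton_self _)
            (var_mem (Finset.mem_union_right _ ((hN y).2 ⟨hy, hxy⟩))))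
        refine edgeVarIdeal_le (fun i hi j hj hij => ?_)
          fun u hu => Ideal.mem_sup_left (var_mem hu)
        by_cases h1 : i = x
        · subst h1; exact hxN j hj hij
        by_cases h2 : j = x
        · subst h2; rw [mul_comm (X i) (X j)]; exact hxN i hi hij.symm
        exact Ideal.mem_sup_left
          (edge_mem (Finset.mem_erase.2 ⟨h1, hi⟩) (Finset.mem_erase.2 ⟨h2, hj⟩) hij)
      obtain ⟨j, hj, q, hq, rfl⟩ := Submodule.mem_sup.1 (hle hp)
      obtain ⟨l, hl, rfl⟩ := Ideal.mem_span_singleton_mul.1 hq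
      exact ⟨j, hj, l, hl, rfl⟩
    · rintro ⟨j, hj, l, hl, rfl⟩
      refine add_mem (hJI hj) ?_
      have hle : edgeVarIdeal K G W' (U ∪ N) ≤
          (Submodule.comap (LinearMap.mulLeft (MvPolynomial (Fin n) K) (X x))
            (edgeVarIdeal K G W U) : Ideal (MvPolynomial (Fin n) K)) := by
        refine edgeVarIdeal_le (fun i hi j hj hij => ?_) fun u hu => ?_
        · change X x * (X i * X j) ∈ edgeVarIdeal K G W U
          exact Ideal.mul_mem_left _ _ (edge_mem ((hW' i).1 hi).1 ((hW' j).1 hj).1 hij)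
        · change X x * X u ∈ edgeVarIdeal K G W U
          rcases Finset.mem_union.1 hu with hu | hu
          · exact Ideal.mul_mem_left _ _ (var_mem hu)
          · exact edge_mem hxW ((hN u).1 hu).1 ((hN u).1 hu).2
      exact hle hl

lemma idealReg_vars (G : SimpleGraph (Fin n)) (U : Finset (Fin n)) :
    IdealReg (edgeVarIdeal K G ∅ U) 1 := by
  induction U using Finset.induction_on with
  | empty =>
    have : edgeVarIdeal K G ∅ ∅ = ⊥ := le_bot_iff.1 (edgeVarIdeal_le (by simp) (by simp))
    rw [this]
    exact idealReg_bot 1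
  | insert u U hu ih =>
    refine idealReg_add u ih (idealReg_top 0) le_top (mem_of_X_mul_mem (by simp) hu) fun p => ?_
    constructor
    · intro hp
      have hle : edgeVarIdeal K G ∅ (insert u U) ≤ edgeVarIdeal K G ∅ U ⊔ Ideal.span {X u} := by
        refine edgeVarIdeal_le (by simp) fun y hy => ?_
        rcases Finset.mem_insert.1 hy with rfl | hy
        · exact Ideal.mem_sup_right (Ideal.mem_span_singleton_self _)
        · exact Ideal.mem_sup_left (var_mem hy)
      obtain ⟨j, hj, q, hq, rfl⟩ := Submodule.mem_sup.1 (hle hp)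
      obtain ⟨l, rfl⟩ := Ideal.mem_span_singleton.1 hq
      exact ⟨j, hj, l, trivial, rfl⟩
    · rintro ⟨j, hj, l, -, rfl⟩
      refine add_mem ?_ (Ideal.mul_mem_right _ _ (var_mem (Finset.mem_insert_self _ _)))
      exact edgeVarIdeal_le (by simp) (fun y hy => var_mem (Finset.mem_insert_of_mem hy)) hj

lemma idealReg_of_no_edge {G : SimpleGraph (Fin n)} {W : Finset (Fin n)} (U : Finset (Fin n))
    (h : ∀ i ∈ W, ∀ j ∈ W, ¬ G.Adj i j) : IdealReg (edgeVarIdeal K G W U) 1 := by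
  have : edgeVarIdeal K G W U = edgeVarIdeal K G ∅ U :=
    le_antisymm (edgeVarIdeal_le (fun i hi j hj hij => absurd hij (h i hi j hj))
      fun u hu => var_mem hu) (edgeVarIdeal_le (by simp) fun u hu => var_mem hu)
  rw [this]
  exact idealReg_vars G U

/-- If `r` co-chordal subgraphs of `G` cover the edges of `G[W]`, then `I(G[W]) + (U)` has regularity
at most `r + 1`. Induction on `W`: for `x` simplicial in the complement of `f 0`, the graph `f 0` has
no edge outside the closed neighbourhood of `x`, so `r - 1` subgraphs suffice for the ideal `L` of
`idealReg_step`. -/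
theorem idealReg_of_cover (G : SimpleGraph (Fin n)) (W : Finset (Fin n)) :
    ∀ (U : Finset (Fin n)) (r : ℕ) (f : Fin r → SimpleGraph (Fin n)),
      (∀ x ∈ W, x ∉ U) → (∀ k, f k ≤ G ∧ Chordal (f k)ᶜ) →
      (∀ i ∈ W, ∀ j ∈ W, G.Adj i j → ∃ k, (f k).Adj i j) →
      IdealReg (edgeVarIdeal K G W U) (r + 1) := by
  classical
  induction W using Finset.strongInduction with
  | H W ih =>
  intro U r f hWU hf hcov
  cases r with
  | zero =>
    refine idealReg_of_no_edge U fun i hi j hj hij => ?_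
    obtain ⟨k, _⟩ := hcov i hi j hj hij
    exact k.elim0
  | succ r =>
    rcases W.eq_empty_or_nonempty with rfl | hne
    · exact (idealReg_vars G U).mono (by omega)
    obtain ⟨x, hxW, hx⟩ := exists_simplicial (hf 0).2 hne
    refine idealReg_step (N := {y ∈ W | G.Adj x y}) (W' := {y ∈ W | y ≠ x ∧ ¬ G.Adj x y})
      hxW (hWU x hxW) (by simp) (by simp) ?_ ?_
    · exact ih _ (Finset.erase_ssubset hxW) U (r + 1) f
        (fun y hy => hWU y (Finset.mem_of_mem_erase hy)) hf
        fun i hi j hj => hcov i (Finset.mem_of_mem_erase hi) j (Finset.mem_of_mem_erase hj)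
    · refine ih _ ((Finset.ssubset_iff_of_subset (Finset.filter_subset _ _)).2
        ⟨x, hxW, by simp⟩) _ r (fun k => f k.succ) ?_ (fun k => hf k.succ) ?_
      · intro y hy
        simp only [Finset.mem_filter, Finset.mem_union, not_or] at hy ⊢
        exact ⟨hWU y hy.1, fun h => hy.2.2 h.2⟩
      · intro i hi j hj hij
        rw [Finset.mem_filter] at hi hj
        obtain ⟨k, hk⟩ := hcov i hi.1 j hj.1 hij
        refine Fin.cases (fun h0 => ?_) (fun k hk => ⟨k, hk⟩) k hk
        -- the non-neighbours of `x` in `f 0` are independent in `f 0`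
        have hi' : (f 0)ᶜ.Adj x i :=
          (SimpleGraph.compl_adj _ _ _).2 ⟨hi.2.1.symm, fun h => hi.2.2 ((hf 0).1 h)⟩
        have hj' : (f 0)ᶜ.Adj x j :=
          (SimpleGraph.compl_adj _ _ _).2 ⟨hj.2.1.symm, fun h => hj.2.2 ((hf 0).1 h)⟩
        exact absurd h0 ((SimpleGraph.compl_adj _ _ _).1
          (hx i hi.1 j hj.1 hi' hj' hij.ne)).2

lemma edgeIdeal_eq (G : SimpleGraph (Fin n)) :
    edgeIdeal K G = edgeVarIdeal K G Finset.univ ∅ := by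
  refine le_antisymm ?_ (edgeVarIdeal_le (fun i _ j _ h => Ideal.subset_span ⟨i, j, h, rfl⟩)
    (by simp))
  rw [edgeIdeal, Ideal.span_le]
  rintro _ ⟨i, j, h, rfl⟩
  exact edge_mem (Finset.mem_univ _) (Finset.mem_univ _) h

/-- Every graph is the union of its single edges, which are co-chordal. Hence the infimum defining
`cochordNum` is attained. -/
lemma exists_cover (G : SimpleGraph (Fin n)) :
    {r | ∃ f : Fin r → SimpleGraph (Fin n),
      (∀ i, f i ≤ G ∧ Chordal (f i)ᶜ) ∧ (⨆ i, f i) = G}.Nonempty := by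
  let e := Fintype.equivFin (Fin n × Fin n)
  have hadj : ∀ p : Fin n × Fin n, ∀ a b, (SimpleGraph.fromEdgeSet {s(p.1, p.2)} ⊓ G).Adj a b →
      s(a, b) = s(p.1, p.2) := fun p a b h =>
    ((SimpleGraph.fromEdgeSet_adj _).1 h.1).1
  refine ⟨_, fun k => SimpleGraph.fromEdgeSet {s((e.symm k).1, (e.symm k).2)} ⊓ G,
    fun k => ⟨inf_le_right, ?_⟩, le_antisymm (iSup_le fun k => inf_le_right) fun a b h => ?_⟩
  · exact chordal_compl_of_subsingleton fun a b c d h1 h2 =>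
      (hadj _ a b h1).trans (hadj _ c d h2).symm
  · rw [SimpleGraph.iSup_adj]
    refine ⟨e (a, b), ?_, h⟩
    rw [SimpleGraph.fromEdgeSet_adj]
    simp [h.ne]

end EdgeIdeals

end CoChord

/-- **Woodroofe's bound.**  Let `G` be a finite simple graph.  Then
`reg I(G) ≤ co-chord(G) + 1`, where `co-chord(G)` is the least number of co-chordal
subgraphs of `G` whose union is `G`. -/
theorem regularity_le_cochordNum_add_one {n : ℕ} (K : Type) [Field K]
    (G : SimpleGraph (Fin n)) :
    reg K (edgeIdeal K G) ≤ (cochordNum G : ℤ) + 1 := by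
  obtain ⟨f, hf, hcov⟩ := Nat.sInf_mem (CoChord.exists_cover G)
  have hreg : CoChord.IdealReg (edgeIdeal K G) (cochordNum G + 1) := by
    rw [CoChord.edgeIdeal_eq]
    refine CoChord.idealReg_of_cover G _ ∅ _ f (by simp) hf fun i _ j _ hij => ?_
    rw [← hcov] at hij
    exact SimpleGraph.iSup_adj.1 hij
  obtain ⟨F, hF⟩ := hreg.exists_gradedFreeRes
  -- if the set of bounds is unbounded below (zero ideal), its `sInf` has the junk value `0`
  by_cases hb : BddBelow { r : ℤ | ∃ F : GradedFreeRes K (edgeIdeal K G),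
      ∀ i, ∀ a : Fin (F.rank i), (F.shift i a : ℤ) - (i : ℤ) ≤ r }
  · exact csInf_le hb ⟨F, by exact_mod_cast hF⟩
  · rw [reg, Int.csInf_of_not_bddBelow hb]
    positivity
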